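/- In a quasi-median graph, a path is a geodesic if and only if it crosses each hyperplane at most once; consequently, the distance between two vertices equals the number of hyperplanes separating them. -/

import Mathlib

/-- Triangle condition. -/
def TriangleCondition {V : Type*} (X : SimpleGraph V) : Prop :=
  ∀ u v w : V, X.Adj v w → X.dist u v = X.dist u w →
    ∃ x : V, X.Adj v x ∧ X.Adj w x ∧ X.dist u x + 1 = X.dist u v

/-- Quadrangle condition. -/
def QuadrangleCondition {V : Type*} (X : SimpleGraph V) : Prop :=
  ∀ u z v w : V, X.Adj v z → X.Adj w z → v ≠ w →
    X.dist u v = X.dist u w → X.dist u z = X.dist u v + 1 →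
    ∃ x : V, X.Adj v x ∧ X.Adj w x ∧ X.dist u x + 1 = X.dist u v

/-- A graph is weakly modular if it satisfies the triangle and quadrangle conditions. -/
def WeaklyModular {V : Type*} (X : SimpleGraph V) : Prop :=
  TriangleCondition X ∧ QuadrangleCondition X

/-- `K₄⁻`: the complete graph on four vertices minus the edge `{2,3}`. -/
def K4minus : SimpleGraph (Fin 4) :=
  SimpleGraph.fromRel (fun a b => ¬((a = 2 ∧ b = 3) ∨ (a = 3 ∧ b = 2)))

/-- A graph is quasi-median if it is connected, weakly modular, and contains no
induced `K₄⁻` and no induced `K_{3,2}`. -/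
def QuasiMedian {V : Type*} (X : SimpleGraph V) : Prop :=
  X.Connected ∧ WeaklyModular X ∧
    IsEmpty (K4minus ↪g X) ∧ IsEmpty (completeBipartiteGraph (Fin 3) (Fin 2) ↪g X)

/-- Two edges of `X` are elementarily related if they are two sides of a triangle
or opposite sides of a square. -/
def EdgeRel {V : Type*} (X : SimpleGraph V) (e e' : Sym2 V) : Prop :=
  e ∈ X.edgeSet ∧ e' ∈ X.edgeSet ∧
    ((∃ a b c : V, e = s(a, b) ∧ e' = s(a, c) ∧ X.Adj a b ∧ X.Adj a c ∧ X.Adj b c) ∨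
     (∃ a b c d : V, e = s(a, b) ∧ e' = s(c, d) ∧ X.Adj a b ∧ X.Adj c d ∧
        X.Adj a c ∧ X.Adj b d ∧ a ≠ d ∧ b ≠ c))

/-- A hyperplane of `X`: the equivalence class, under the transitive closure of the
square/triangle relation, of some edge of `X`. -/
def IsHyperplane {V : Type*} (X : SimpleGraph V) (J : Set (Sym2 V)) : Prop :=
  ∃ e ∈ X.edgeSet, J = {e' | e' ∈ X.edgeSet ∧ Relation.EqvGen (EdgeRel X) e e'}

/-- A hyperplane `J` separates `u` from `v` if every walk from `u` to `v` uses an edge of `J`. -/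
def Separates {V : Type*} (X : SimpleGraph V) (J : Set (Sym2 V)) (u v : V) : Prop :=
  ∀ p : X.Walk u v, ∃ e ∈ p.edges, e ∈ J

open Classical in
/-- The number of times the walk `p` crosses the hyperplane `J`. -/
noncomputable def crossCount {V : Type*} {X : SimpleGraph V} {u v : V}
    (p : X.Walk u v) (J : Set (Sym2 V)) : ℕ :=
  (p.edges.filter (fun e => e ∈ J)).length

open SimpleGraph

section QM
variable {V : Type*} {X : SimpleGraph V}

lemma qm_k4 (hX : QuasiMedian X) {p q r s : V} (hpq : X.Adj p q) (hpr : X.Adj p r)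
    (hqr : X.Adj q r) (hps : X.Adj p s) (hqs : X.Adj q s) : r = s ∨ X.Adj r s := by
  by_contra hcon
  push Not at hcon
  obtain ⟨hne, hna⟩ := hcon
  have hna' : ¬ X.Adj s r := fun h => hna h.symm
  refine hX.2.2.1.false ⟨⟨![p, q, r, s], ?_⟩, ?_⟩
  · have h1 := hpq.ne
    have h2 := hpr.ne
    have h3 := hqr.ne
    have h4 := hps.ne
    have h5 := hqs.ne
    intro i j hij
    fin_cases i <;> fin_cases j <;> simp_all
  · intro i j
    change X.Adj (![p, q, r, s] i) (![p, q, r, s] j) ↔ _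
    fin_cases i <;> fin_cases j <;>
      simp_all [K4minus, hpq.symm, hpr.symm, hqr.symm, hps.symm, hqs.symm]

lemma qm_k32 (hX : QuasiMedian X) {p q r a d : V}
    (hpa : X.Adj p a) (hpd : X.Adj p d) (hqa : X.Adj q a) (hqd : X.Adj q d)
    (hra : X.Adj r a) (hrd : X.Adj r d) (had : ¬ X.Adj a d) (hne : a ≠ d)
    (hpq : ¬ X.Adj p q) (hpr : ¬ X.Adj p r) (hqr : ¬ X.Adj q r)
    (npq : p ≠ q) (npr : p ≠ r) (nqr : q ≠ r) : False := by
  have had' : ¬ X.Adj d a := fun h => had h.symm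
  have hpq' : ¬ X.Adj q p := fun h => hpq h.symm
  have hpr' : ¬ X.Adj r p := fun h => hpr h.symm
  have hqr' : ¬ X.Adj r q := fun h => hqr h.symm
  refine hX.2.2.2.false ⟨⟨Sum.elim ![p, q, r] ![a, d], ?_⟩, ?_⟩
  · have h1 := hpa.ne
    have h2 := hpd.ne
    have h3 := hqa.ne
    have h4 := hqd.ne
    have h5 := hra.ne
    have h6 := hrd.ne
    rintro (i | i) (j | j) hij <;> fin_cases i <;> fin_cases j <;> simp_all
  · intro i j
    change X.Adj (Sum.elim ![p, q, r] ![a, d] i) (Sum.elim ![p, q, r] ![a, d] j) ↔ _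
    rcases i with i | i <;> rcases j with j | j <;> fin_cases i <;> fin_cases j <;>
      simp_all [hpa.symm, hpd.symm, hqa.symm, hqd.symm, hra.symm, hrd.symm]

lemma qm_step (hX : QuasiMedian X) (u : V) {x y : V} (h : X.Adj x y) :
    X.dist u x ≤ X.dist u y + 1 := by
  have h1 := hX.1.dist_triangle (u := u) (v := y) (w := x)
  have h2 : X.dist y x = 1 := dist_eq_one_iff_adj.2 h.symm
  omega

/-- No triangle has two vertices at distance `n` and one at distance `n + 1`. -/
lemma qm_tri (hX : QuasiMedian X) {u a b c : V} (hab : X.Adj a b) (hac : X.Adj a c)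
    (hbc : X.Adj b c) (h1 : X.dist u a = X.dist u b) (h2 : X.dist u c = X.dist u a + 1) :
    False := by
  obtain ⟨y, hy1, hy2, hy3⟩ := hX.2.1.1 u a b hab h1
  rcases qm_k4 hX hab hac hbc hy1 hy2 with h | h
  · subst h; omega
  · have := qm_step hX u h; omega

/-- An induced square, with opposite sides `ab` and `cd`. -/
def Opp (X : SimpleGraph V) (a b c d : V) : Prop :=
  X.Adj a b ∧ X.Adj c d ∧ X.Adj a c ∧ X.Adj b d ∧ ¬ X.Adj a d ∧ ¬ X.Adj b c ∧ a ≠ d ∧ b ≠ c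

lemma Opp.flip {a b c d : V} (h : Opp X a b c d) : Opp X b a d c := by
  obtain ⟨h1, h2, h3, h4, h5, h6, h7, h8⟩ := h
  exact ⟨h1.symm, h2.symm, h4, h3, h6, h5, h8, h7⟩

lemma opp_case1 (hX : QuasiMedian X) {u a b c d : V} (h : Opp X a b c d)
    (hab : X.dist u b = X.dist u a + 1) (hd : X.dist u d = X.dist u a) :
    X.dist u c < X.dist u d := by
  by_contra hc
  obtain ⟨h1, h2, h3, h4, h5, h6, h7, h8⟩ := h
  obtain ⟨y, ya, yd, hy⟩ := hX.2.1.2 u b a d h1 h4.symm h7 hd.symm hab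
  have nyb : ¬ X.Adj b y := fun h => by have := qm_step hX u h; omega
  have nby : b ≠ y := by rintro rfl; omega
  have ncy : c ≠ y := by rintro rfl; omega
  by_cases hcy : X.Adj c y
  · rcases qm_k4 hX hcy h3.symm ya.symm h2 yd.symm with h | h
    · exact h7 h
    · exact h5 h
  · exact qm_k32 hX h1.symm h4 h3.symm h2 ya.symm yd.symm h5 h7 h6 nyb hcy h8 nby ncy

/-- Extending an induced square to a prism. -/
lemma opp_ext (hX : QuasiMedian X) {a b c d e : V} (h : Opp X a b c d)
    (hea : X.Adj e a) (heb : X.Adj e b) :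
    ∃ f, X.Adj f c ∧ X.Adj f d ∧ Opp X a e c f ∧ Opp X b e d f := by
  obtain ⟨h1, h2, h3, h4, h5, h6, h7, h8⟩ := h
  have nec : ¬ X.Adj e c := fun h => by
    rcases qm_k4 hX hea heb h1 h h3 with h | h
    · exact h8 h
    · exact h6 h
  have ned : ¬ X.Adj e d := fun h => by
    rcases qm_k4 hX heb hea h1.symm h h4 with h | h
    · exact h7 h
    · exact h5 h
  have nec' : e ≠ c := by rintro rfl; exact h6 heb.symm
  have ned' : e ≠ d := by rintro rfl; exact h5 hea.symm
  have dist2 : ∀ x y z : V, X.Adj x y → X.Adj y z → x ≠ z → ¬ X.Adj x z → X.dist x z = 2 := by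
    intro x y z hxy hyz hne hna
    have a1 := qm_step hX x hyz.symm
    have a2 : X.dist x y = 1 := dist_eq_one_iff_adj.2 hxy
    have a3 : X.dist x z ≠ 1 := fun h => hna (dist_eq_one_iff_adj.1 h)
    have a4 : X.dist x z ≠ 0 := fun h => hne (hX.1.dist_eq_zero_iff.1 h)
    omega
  have d1 := dist2 e a c hea h3 nec' nec
  have d2 := dist2 e b d heb h4 ned' ned
  obtain ⟨f, fc, fd, hf⟩ := hX.2.1.1 e c d h2 (by omega)
  have hef : X.Adj e f := dist_eq_one_iff_adj.1 (by omega)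
  have naf : ¬ X.Adj a f := fun h => by
    rcases qm_k4 hX fc h3.symm h.symm h2 fd.symm with h | h
    · exact h7 h
    · exact h5 h
  have nbf : ¬ X.Adj b f := fun h => by
    rcases qm_k4 hX fd h4.symm h.symm h2.symm fc.symm with h | h
    · exact h8 h
    · exact h6 h
  have naf' : a ≠ f := by rintro rfl; exact h5 fd.symm
  have nbf' : b ≠ f := by rintro rfl; exact h6 fc.symm
  exact ⟨f, fc.symm, fd.symm, ⟨hea.symm, fc, h3, hef, naf, nec, naf', nec'⟩,
    ⟨heb.symm, fd, h4, hef, nbf, ned, nbf', ned'⟩⟩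

lemma opp_half (hX : QuasiMedian X) {u a b c d : V} (h : Opp X a b c d)
    (hab : X.dist u a < X.dist u b) : X.dist u c < X.dist u d := by
  obtain ⟨h1, h2, h3, h4, h5, h6, h7, h8⟩ := id h
  have e1 := qm_step hX u h1.symm
  have e2 := qm_step hX u h3.symm
  have e3 := qm_step hX u h3
  have e4 := qm_step hX u h4
  have e5 := qm_step hX u h2
  by_contra hc
  by_cases hd : X.dist u d = X.dist u a
  · exact hc (opp_case1 hX h (by omega) hd)
  have hd : X.dist u d = X.dist u b := by omega
  obtain ⟨y, yb, yd, hy⟩ := hX.2.1.1 u b d h4 hd.symm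
  have h' : Opp X b d a c := ⟨h4, h3, h1.symm, h2.symm, h6, fun h => h5 h.symm, h8, h7.symm⟩
  obtain ⟨t, ta, tc, o1, o2⟩ := opp_ext hX h' yb.symm yd.symm
  obtain ⟨k1, k2, k3, k4, k5, k6, k7, k8⟩ := id o1
  have o3 : Opp X a b t y := ⟨h1, k4.symm, k2, k1, fun h => k6 h.symm, k5, k8.symm, k7⟩
  have := opp_case1 (u := u) hX o3 (by omega) (by omega)
  have := qm_step hX u tc.symm
  omega

/-- `x` lies in the maximal clique spanned by `e`. -/
def InC (X : SimpleGraph V) (e : Sym2 V) (g : V) : Prop := ∀ a ∈ e, g = a ∨ X.Adj g a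

lemma inC_mk {a b g : V} :
    InC X s(a, b) g ↔ (g = a ∨ X.Adj g a) ∧ (g = b ∨ X.Adj g b) := by
  simp [InC]

def SepE (X : SimpleGraph V) (e : Sym2 V) (x y : V) : Prop :=
  ∃ g h, X.Adj g h ∧ InC X e g ∧ InC X e h ∧ X.dist x g < X.dist x h ∧ X.dist y h < X.dist y g

lemma SepE.symm {e : Sym2 V} {x y : V} (h : SepE X e x y) : SepE X e y x := by
  obtain ⟨g, h, h1, h2, h3, h4, h5⟩ := h
  exact ⟨h, g, h1.symm, h3, h2, h5, h4⟩

lemma inC_adj (hX : QuasiMedian X) {a b g h : V} (hab : X.Adj a b)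
    (hg : InC X s(a, b) g) (hh : InC X s(a, b) h) : g = h ∨ X.Adj g h := by
  rw [inC_mk] at hg hh
  obtain ⟨rfl | hg1, rfl | hg2⟩ := hg
  · exact Or.inl (absurd hab (X.irrefl))
  · exact hh.1.imp Eq.symm Adj.symm
  · exact hh.2.imp Eq.symm Adj.symm
  · obtain ⟨rfl | hh1, rfl | hh2⟩ := hh
    · exact Or.inr hg1
    · exact Or.inr hg1
    · exact Or.inr hg2
    · exact qm_k4 hX hab hg1.symm hg2.symm hh1.symm hh2.symm

/-- The clique is determined by any two of its vertices. -/
lemma inC_trans (hX : QuasiMedian X) {a b g h k : V} (hab : X.Adj a b) (hgh : X.Adj g h)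
    (hg : InC X s(a, b) g) (hh : InC X s(a, b) h) (hk : InC X s(g, h) k) : InC X s(a, b) k := by
  have ha : InC X s(g, h) a := by
    rw [inC_mk] at *
    exact ⟨hg.1.imp Eq.symm Adj.symm, hh.1.imp Eq.symm Adj.symm⟩
  have hb : InC X s(g, h) b := by
    rw [inC_mk] at *
    exact ⟨hg.2.imp Eq.symm Adj.symm, hh.2.imp Eq.symm Adj.symm⟩
  exact inC_mk.2 ⟨inC_adj hX hgh hk ha, inC_adj hX hgh hk hb⟩

/-- If one clique vertex is closer than another one then it is the gate. -/
lemma gate_of_lt (hX : QuasiMedian X) {a b g h k u : V} (hab : X.Adj a b)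
    (hg : InC X s(a, b) g) (hh : InC X s(a, b) h) (hk : InC X s(a, b) k)
    (hlt : X.dist u g < X.dist u h) (hne : k ≠ g) : X.dist u g < X.dist u k := by
  have a1 : X.Adj g h := (inC_adj hX hab hg hh).resolve_left (by rintro rfl; omega)
  have a2 : X.Adj k g := (inC_adj hX hab hk hg).resolve_left hne
  by_contra hcon
  have e1 := qm_step hX u a1.symm
  have e2 := qm_step hX u a2.symm
  have nkh : k ≠ h := by rintro rfl; omega
  have a3 : X.Adj k h := (inC_adj hX hab hk hh).resolve_left nkh
  have e3 := qm_step hX u a3.symm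
  exact qm_tri hX a2 a3 a1 (u := u) (by omega) (by omega)

lemma gate_exists (hX : QuasiMedian X) {a b : V} (hab : X.Adj a b) (u : V) :
    ∃ g, InC X s(a, b) g ∧ ∀ k, InC X s(a, b) k → k ≠ g → X.dist u g < X.dist u k := by
  have ha : InC X s(a, b) a := inC_mk.2 ⟨Or.inl rfl, Or.inr hab⟩
  have hb : InC X s(a, b) b := inC_mk.2 ⟨Or.inr hab.symm, Or.inl rfl⟩
  rcases lt_trichotomy (X.dist u a) (X.dist u b) with h | h | h
  · exact ⟨a, ha, fun k hk hne => gate_of_lt hX hab ha hb hk h hne⟩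
  · obtain ⟨g, g1, g2, g3⟩ := hX.2.1.1 u a b hab h
    have hg : InC X s(a, b) g := inC_mk.2 ⟨Or.inr g1.symm, Or.inr g2.symm⟩
    exact ⟨g, hg, fun k hk hne => gate_of_lt hX hab hg ha hk (by omega) hne⟩
  · exact ⟨b, hb, fun k hk hne => gate_of_lt hX hab hb ha hk h hne⟩

lemma sep_split (hX : QuasiMedian X) {e : Sym2 V} (he : e ∈ X.edgeSet) {u w : V}
    (h : SepE X e u w) (v : V) : SepE X e u v ∨ SepE X e v w := by
  induction e with
  | _ a b =>
  have hab : X.Adj a b := he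
  obtain ⟨g, h, hgh, hg, hh, h1, h2⟩ := h
  obtain ⟨k, hk, hk2⟩ := gate_exists hX hab v
  by_cases hkg : k = g
  · subst hkg
    exact Or.inr ⟨k, h, hgh, hk, hh, hk2 h hh hgh.ne', h2⟩
  · exact Or.inl ⟨g, k, ((inC_adj hX hab hk hg).resolve_left hkg).symm, hg, hk,
      gate_of_lt hX hab hg hh hk h1 hkg, hk2 g hg (Ne.symm hkg)⟩

lemma sep_self {x y : V} (h : X.Adj x y) : SepE X s(x, y) x y := by
  refine ⟨x, y, h, inC_mk.2 ⟨Or.inl rfl, Or.inr h⟩, inC_mk.2 ⟨Or.inr h.symm, Or.inl rfl⟩, ?_, ?_⟩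
  · rw [dist_self, dist_eq_one_iff_adj.2 h]; omega
  · rw [dist_self, dist_eq_one_iff_adj.2 h.symm]; omega

lemma sep_geod (hX : QuasiMedian X) {a b y z : V} (hab : X.Adj a b)
    (hy : X.dist y b < X.dist y a) (hz : X.dist z b < X.dist z a) : ¬ SepE X s(a, b) y z := by
  rintro ⟨g, h, hgh, hg, hh, h1, h2⟩
  have ha : InC X s(a, b) a := inC_mk.2 ⟨Or.inl rfl, Or.inr hab⟩
  have hb : InC X s(a, b) b := inC_mk.2 ⟨Or.inr hab.symm, Or.inl rfl⟩
  have key : ∀ u g h : V, InC X s(a, b) g → InC X s(a, b) h → X.dist u g < X.dist u h →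
      X.dist u b < X.dist u a → g = b := by
    intro u g h hg hh h1 h2
    by_contra hne
    have := gate_of_lt hX hab hb ha hg h2 hne
    have := gate_of_lt hX hab hg hh hb h1 (Ne.symm hne)
    omega
  have e1 := key y g h hg hh h1 hy
  have e2 := key z h g hh hg h2 hz
  exact hgh.ne (e1.trans e2.symm)

lemma rel_tri {a b c : V} (h1 : X.Adj a b) (h2 : X.Adj a c) (h3 : b = c ∨ X.Adj b c) :
    Relation.EqvGen (EdgeRel X) s(a, b) s(a, c) := by
  rcases h3 with rfl | h3
  · exact .refl _
  · exact .rel _ _ ⟨h1, h2, Or.inl ⟨a, b, c, rfl, rfl, h1, h2, h3⟩⟩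

lemma rel_clique (hX : QuasiMedian X) {a b g h : V} (hab : X.Adj a b) (hgh : X.Adj g h)
    (hg : InC X s(a, b) g) (hh : InC X s(a, b) h) :
    Relation.EqvGen (EdgeRel X) s(a, b) s(g, h) := by
  have ha : InC X s(a, b) a := inC_mk.2 ⟨Or.inl rfl, Or.inr hab⟩
  have hb : InC X s(a, b) b := inC_mk.2 ⟨Or.inr hab.symm, Or.inl rfl⟩
  by_cases hag : a = g
  · subst hag
    exact rel_tri hab hgh (inC_adj hX hab hb hh)
  · have hag' := (inC_adj hX hab ha hg).resolve_left hag
    refine (rel_tri hab hag' (inC_adj hX hab hb hg)).trans _ _ _ ?_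
    rw [Sym2.eq_swap]
    exact rel_tri hag'.symm hgh (inC_adj hX hab ha hh)

/-- Parallel edges are in the same hyperplane. -/
lemma rel_par (hX : QuasiMedian X) {p q : V} (hpq : X.Adj p q) (n : ℕ) : ∀ x y : V, X.Adj x y →
    X.dist x p = n → X.dist y q = n → X.dist x q = n + 1 → X.dist y p = n + 1 →
    Relation.EqvGen (EdgeRel X) s(p, q) s(x, y) := by
  induction n with
  | zero =>
    intro x y hxy h1 h2 h3 h4
    rw [hX.1.dist_eq_zero_iff] at h1 h2
    subst h1 h2
    exact .refl _
  | succ n ih =>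
    intro x y hxy h1 h2 h3 h4
    obtain ⟨y', hyy', hy'⟩ : ∃ y', X.Adj y y' ∧ X.dist y' q = n := by
      obtain ⟨w, hw⟩ := hX.1.exists_walk_length_eq_dist y q
      cases w with
      | nil => simp at h2
      | @cons _ y' _ hadj w' =>
        refine ⟨y', hadj, ?_⟩
        have e1 := dist_le w'
        have e2 := qm_step hX q hadj
        rw [dist_comm, dist_comm (u := q)] at e2
        simp at hw
        omega
    have e1 := qm_step hX p hyy'
    have e2 := qm_step hX y' hpq
    rw [dist_comm] at h1 h4
    rw [dist_comm (u := y')] at e2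
    have nxy' : x ≠ y' := by rintro rfl; omega
    obtain ⟨x', hx1, hx2, hx3⟩ := hX.2.1.2 p y x y' hxy hyy'.symm nxy' (by omega) (by omega)
    have e3 := qm_step hX q hx1
    have e4 := qm_step hX q hx2.symm
    rw [dist_comm (u := q), dist_comm (u := q)] at e3 e4
    have nx'y : x' ≠ y := by rintro rfl; omega
    refine (ih x' y' hx2.symm (by rw [dist_comm]; omega) hy' (by omega)
      (by rw [dist_comm]; omega)).trans _ _ _ ?_
    refine .rel _ _ ⟨hx2.symm, hxy, Or.inr ⟨x', y', x, y, rfl, rfl, hx2.symm, hxy, hx1.symm,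
      hyy'.symm, nx'y, nxy'.symm⟩⟩

lemma sep_rel (hX : QuasiMedian X) {e : Sym2 V} (he : e ∈ X.edgeSet) {x y : V} (hxy : X.Adj x y)
    (h : SepE X e x y) : Relation.EqvGen (EdgeRel X) e s(x, y) := by
  induction e with
  | _ a b =>
  have hab : X.Adj a b := he
  obtain ⟨g, h, hgh, hg, hh, h1, h2⟩ := h
  refine (rel_clique hX hab hgh hg hh).trans _ _ _ ?_
  have e1 := qm_step hX x hgh.symm
  have e2 := qm_step hX y hgh
  have e3 := qm_step hX h hxy
  have e4 := qm_step hX g hxy.symm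
  rw [dist_comm (u := h), dist_comm (u := h)] at e3
  rw [dist_comm (u := g), dist_comm (u := g)] at e4
  exact rel_par hX hgh (X.dist x g) x y hxy rfl (by omega) (by omega) (by omega)

lemma sep_mono (hX : QuasiMedian X) {e : Sym2 V} {c d x y : V} (hcd : X.Adj c d)
    (hc : InC X e c) (hd : InC X e d) (he : e ∈ X.edgeSet)
    (h : SepE X s(c, d) x y) : SepE X e x y := by
  induction e with
  | _ a b =>
  obtain ⟨g, h, hgh, hg, hh, h1, h2⟩ := h
  exact ⟨g, h, hgh, inC_trans hX he hcd hc hd hg, inC_trans hX he hcd hc hd hh, h1, h2⟩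

lemma opp_sep_aux (hX : QuasiMedian X) {a b c d g h x y : V} (o : Opp X a b c d)
    (hgh : X.Adj g h) (hg : InC X s(a, b) g) (hh : InC X s(a, b) h) :
    ∃ g' h', Opp X g h g' h' ∧ InC X s(c, d) g' ∧ InC X s(c, d) h' := by
  have hab : X.Adj a b := o.1
  have hcd : X.Adj c d := o.2.1
  have ha : InC X s(a, b) a := inC_mk.2 ⟨Or.inl rfl, Or.inr hab⟩
  have hc : InC X s(c, d) c := inC_mk.2 ⟨Or.inl rfl, Or.inr hcd⟩
  have hd : InC X s(c, d) d := inC_mk.2 ⟨Or.inr hcd.symm, Or.inl rfl⟩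
  -- squares through `a`
  have key : ∀ k, InC X s(a, b) k → k ≠ a → ∃ k', Opp X a k c k' ∧ InC X s(c, d) k' := by
    intro k hk hka
    by_cases hkb : k = b
    · subst hkb; exact ⟨d, o, hd⟩
    · rw [inC_mk] at hk
      obtain ⟨f, f1, f2, f3, f4⟩ := opp_ext hX o (hk.1.resolve_left hka) (hk.2.resolve_left hkb)
      exact ⟨f, f3, inC_mk.2 ⟨Or.inr f1, Or.inr f2⟩⟩
  by_cases hga : g = a
  · subst hga
    obtain ⟨h', o1, o2⟩ := key h hh hgh.ne'
    exact ⟨c, h', o1, hc, o2⟩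
  by_cases hha : h = a
  · subst hha
    obtain ⟨g', o1, o2⟩ := key g hg hgh.ne
    exact ⟨g', c, o1.flip, o2, hc⟩
  obtain ⟨g', o1, o2⟩ := key g hg hga
  have hha' := (inC_adj hX hab hh ha).resolve_left hha
  obtain ⟨h', f1, f2, f3, f4⟩ := opp_ext hX o1 hha' hgh.symm
  exact ⟨g', h', f4, o2, inC_trans hX hcd o1.2.1 hc o2 (inC_mk.2 ⟨Or.inr f1, Or.inr f2⟩)⟩

lemma edgeRel_symm {e e' : Sym2 V} (h : EdgeRel X e e') : EdgeRel X e' e := by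
  obtain ⟨h1, h2, ⟨a, b, c, r1, r2, h3, h4, h5⟩ | ⟨a, b, c, d, r1, r2, h3, h4, h5, h6, h7, h8⟩⟩ := h
  · exact ⟨h2, h1, Or.inl ⟨a, c, b, r2, r1, h4, h3, h5.symm⟩⟩
  · exact ⟨h2, h1, Or.inr ⟨c, d, a, b, r2, r1, h4, h3, h5.symm, h6.symm, h8.symm, h7.symm⟩⟩

lemma sep_inv (hX : QuasiMedian X) {e e' : Sym2 V} (h : EdgeRel X e e') {x y : V}
    (hs : SepE X e x y) : SepE X e' x y := by
  obtain ⟨h1, h2, ⟨a, b, c, rfl, rfl, h3, h4, h5⟩ |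
    ⟨a, b, c, d, rfl, rfl, h3, h4, h5, h6, h7, h8⟩⟩ := h
  · exact sep_mono hX h3 (inC_mk.2 ⟨Or.inl rfl, Or.inr h4⟩) (inC_mk.2 ⟨Or.inr h3.symm, Or.inr h5⟩)
      h2 hs
  · by_cases hD : X.Adj a d ∨ X.Adj b c
    · have had : X.Adj a d := by
        rcases hD with h | h
        · exact h
        · exact (qm_k4 hX h h3.symm h5.symm h6 h4).resolve_left h7
      have hbc : X.Adj b c := (qm_k4 hX had h3 h6.symm h5 h4.symm).resolve_left h8
      exact sep_mono hX h3 (inC_mk.2 ⟨Or.inr h5, Or.inr had⟩) (inC_mk.2 ⟨Or.inr hbc, Or.inr h6⟩)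
        h2 hs
    · push Not at hD
      have o : Opp X a b c d := ⟨h3, h4, h5, h6, hD.1, hD.2, h7, h8⟩
      obtain ⟨g, h, hgh, hg, hh, k1, k2⟩ := hs
      obtain ⟨g', h', o', hg', hh'⟩ := opp_sep_aux (x := x) (y := y) hX o hgh hg hh
      exact ⟨g', h', o'.2.1, hg', hh', opp_half hX o' k1, opp_half hX o'.flip k2⟩

lemma sep_eqv (hX : QuasiMedian X) {e e' : Sym2 V} (h : Relation.EqvGen (EdgeRel X) e e')
    {x y : V} : SepE X e x y ↔ SepE X e' x y := by
  induction h with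
  | rel _ _ h => exact ⟨sep_inv hX h, sep_inv hX (edgeRel_symm h)⟩
  | refl => rfl
  | symm _ _ _ ih => exact ih.symm
  | trans _ _ _ _ _ ih1 ih2 => exact ih1.trans ih2

/-- The hyperplane of an edge. -/
def cls (X : SimpleGraph V) (e : Sym2 V) : Set (Sym2 V) :=
  {e' | e' ∈ X.edgeSet ∧ Relation.EqvGen (EdgeRel X) e e'}

lemma mem_cls_iff (hX : QuasiMedian X) {e : Sym2 V} (he : e ∈ X.edgeSet) {x y : V}
    (hxy : X.Adj x y) : s(x, y) ∈ cls X e ↔ SepE X e x y :=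
  ⟨fun h => (sep_eqv hX h.2).2 (sep_self hxy), fun h => ⟨hxy, sep_rel hX he hxy h⟩⟩

lemma cls_eq_of_mem {e e' : Sym2 V} (h : e' ∈ cls X e) : cls X e' = cls X e := by
  ext f
  exact ⟨fun hf => ⟨hf.1, h.2.trans _ _ _ hf.2⟩, fun hf => ⟨hf.1, (h.2.symm _ _).trans _ _ _ hf.2⟩⟩

lemma mem_cls_iff_eq {e e' : Sym2 V} (h : e' ∈ X.edgeSet) : e' ∈ cls X e ↔ cls X e' = cls X e :=
  ⟨cls_eq_of_mem, fun hh => hh ▸ ⟨h, .refl _⟩⟩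

lemma sep_exists (hX : QuasiMedian X) {e : Sym2 V} (he : e ∈ X.edgeSet) {u v : V}
    (p : X.Walk u v) : SepE X e u v → ∃ f ∈ p.edges, f ∈ cls X e := by
  induction p with
  | nil =>
    rintro ⟨g, h, _, _, _, h1, h2⟩
    omega
  | @cons u w v hadj q ih =>
    intro h
    rcases sep_split hX he h w with h | h
    · exact ⟨s(u, w), by simp, (mem_cls_iff hX he hadj).2 h⟩
    · obtain ⟨f, h1, h2⟩ := ih h
      exact ⟨f, by simp [h1], h2⟩

lemma crossCount_cons_pos {u v w : V} (h : X.Adj u v) (q : X.Walk v w) {J : Set (Sym2 V)}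
    (hJ : s(u, v) ∈ J) : crossCount (Walk.cons h q) J = crossCount q J + 1 := by
  simp [crossCount, hJ]

lemma crossCount_cons_neg {u v w : V} (h : X.Adj u v) (q : X.Walk v w) {J : Set (Sym2 V)}
    (hJ : s(u, v) ∉ J) : crossCount (Walk.cons h q) J = crossCount q J := by
  simp [crossCount, hJ]

lemma crossCount_eq_zero {u v : V} (q : X.Walk u v) {J : Set (Sym2 V)} :
    crossCount q J = 0 ↔ ∀ f ∈ q.edges, f ∉ J := by
  simp [crossCount]

lemma sep_of_one (hX : QuasiMedian X) {e : Sym2 V} (he : e ∈ X.edgeSet) {u v : V}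
    (p : X.Walk u v) : crossCount p (cls X e) = 1 → SepE X e u v := by
  induction p with
  | nil => simp [crossCount]
  | @cons u w v hadj q ih =>
    intro h
    by_cases hJ : s(u, w) ∈ cls X e
    · rw [crossCount_cons_pos hadj q hJ] at h
      have h0 := (crossCount_eq_zero q).1 (by omega : crossCount q (cls X e) = 0)
      rcases sep_split hX he ((mem_cls_iff hX he hadj).1 hJ) v with h | h
      · exact h
      · obtain ⟨f, h1, h2⟩ := sep_exists hX he q h.symm
        exact absurd h2 (h0 f h1)
    · rw [crossCount_cons_neg hadj q hJ] at h
      rcases sep_split hX he (ih h) u with h | h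
      · exact absurd ((mem_cls_iff hX he hadj).2 h.symm) hJ
      · exact h

lemma edge_split {u v : V} (p : X.Walk u v) : ∀ f ∈ p.edges, ∃ (y z : V) (_ : X.Adj y z)
    (q : X.Walk u y) (r : X.Walk z v), f = s(y, z) ∧ p.length = q.length + 1 + r.length := by
  induction p with
  | nil => simp
  | @cons u w v hadj p ih =>
    intro f hf
    rw [Walk.edges_cons, List.mem_cons] at hf
    rcases hf with rfl | hf
    · exact ⟨u, w, hadj, .nil, p, rfl, by simp; omega⟩
    · obtain ⟨y, z, h, q, r, h1, h2⟩ := ih f hf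
      exact ⟨y, z, h, .cons hadj q, r, h1, by simp; omega⟩

lemma geod_cross (hX : QuasiMedian X) {e : Sym2 V} (he : e ∈ X.edgeSet) {u v : V}
    (p : X.Walk u v) : p.length = X.dist u v → crossCount p (cls X e) ≤ 1 := by
  induction p with
  | nil => simp [crossCount]
  | @cons u w v hadj p ih =>
    intro hp
    rw [Walk.length_cons] at hp
    by_cases hJ : s(u, w) ∈ cls X e
    · rw [crossCount_cons_pos hadj p hJ]
      suffices crossCount p (cls X e) = 0 by omega
      rw [crossCount_eq_zero]
      intro f hf hfJ
      obtain ⟨y, z, hyz, q, r, rfl, hl⟩ := edge_split p f hf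
      rw [← cls_eq_of_mem hJ, mem_cls_iff hX hadj hyz] at hfJ
      have t1 := hX.1.dist_triangle (u := u) (v := y) (w := v)
      have t2 := hX.1.dist_triangle (u := u) (v := z) (w := v)
      have t3 := dist_le q
      have t4 := dist_le r
      have t5 := dist_le (Walk.cons hyz r)
      have t6 := qm_step hX w hyz.symm
      rw [Walk.length_cons] at t5
      refine sep_geod hX hadj ?_ ?_ hfJ
      · rw [dist_comm (v := w), dist_comm (v := u)]; omega
      · rw [dist_comm (v := w), dist_comm (v := u)]; omega
    · rw [crossCount_cons_neg hadj p hJ]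
      apply ih
      have t1 := hX.1.dist_triangle (u := u) (v := w) (w := v)
      have t2 : X.dist u w = 1 := dist_eq_one_iff_adj.2 hadj
      have t3 := dist_le p
      omega

lemma length_eq_ncard (hX : QuasiMedian X) {u v : V} (p : X.Walk u v)
    (hp : ∀ J : Set (Sym2 V), IsHyperplane X J → crossCount p J ≤ 1) :
    p.length = {J : Set (Sym2 V) | IsHyperplane X J ∧ Separates X J u v}.ncard := by
  classical
  have hnd : (p.edges.map (cls X)).Nodup := by
    rw [List.nodup_iff_count_le_one]
    intro J
    by_cases hJ : J ∈ p.edges.map (cls X)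
    · obtain ⟨e, he, rfl⟩ := List.mem_map.1 hJ
      refine le_trans (le_of_eq ?_) (hp (cls X e) ⟨e, p.edges_subset_edgeSet he, rfl⟩)
      unfold crossCount
      rw [List.count, List.countP_map, List.countP_eq_length_filter]
      congr 1
      apply List.filter_congr
      intro f hf
      rw [Bool.eq_iff_iff]
      simp [mem_cls_iff_eq (p.edges_subset_edgeSet hf)]
    · rw [List.count_eq_zero_of_not_mem hJ]; omega
  have hset : {J : Set (Sym2 V) | IsHyperplane X J ∧ Separates X J u v}
      = ((p.edges.map (cls X)).toFinset : Set (Set (Sym2 V))) := by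
    ext J
    simp only [Set.mem_setOf_eq, List.coe_toFinset, List.mem_map]
    constructor
    · rintro ⟨⟨e, he, rfl⟩, hs⟩
      obtain ⟨f, h1, h2⟩ := hs p
      exact ⟨f, h1, cls_eq_of_mem h2⟩
    · rintro ⟨e, he, rfl⟩
      have he' := p.edges_subset_edgeSet he
      have hh : IsHyperplane X (cls X e) := ⟨e, he', rfl⟩
      refine ⟨hh, fun q => sep_exists hX he' q (sep_of_one hX he' p ?_)⟩
      have h1 := hp _ hh
      have h2 : crossCount p (cls X e) ≠ 0 := fun h0 =>
        (crossCount_eq_zero p).1 h0 e he ⟨he', .refl _⟩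
      omega
  rw [hset, Set.ncard_coe_finset, List.toFinset_card_of_nodup hnd, List.length_map,
    Walk.length_edges]

end QM

/-- In a quasi-median graph, a walk is a geodesic iff it crosses each hyperplane at most
once; consequently the distance between two vertices equals the number of hyperplanes
separating them. -/
theorem geodesic_iff_crosses_once {V : Type*} (X : SimpleGraph V) (hX : QuasiMedian X) :
    (∀ (u v : V) (p : X.Walk u v),
      p.length = X.dist u v ↔ ∀ J : Set (Sym2 V), IsHyperplane X J → crossCount p J ≤ 1) ∧
    (∀ u v : V, X.dist u v = {J : Set (Sym2 V) | IsHyperplane X J ∧ Separates X J u v}.ncard) := by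
  have h1 : ∀ (u v : V) (p : X.Walk u v), p.length = X.dist u v →
      ∀ J : Set (Sym2 V), IsHyperplane X J → crossCount p J ≤ 1 := by
    rintro u v p hp J ⟨e, he, rfl⟩
    exact geod_cross hX he p hp
  have h2 : ∀ u v : V,
      X.dist u v = {J : Set (Sym2 V) | IsHyperplane X J ∧ Separates X J u v}.ncard := by
    intro u v
    obtain ⟨p, hp⟩ := hX.1.exists_walk_length_eq_dist u v
    rw [← hp]
    exact length_eq_ncard hX p (h1 u v p hp)
  exact ⟨fun u v p => ⟨h1 u v p, fun h => (length_eq_ncard hX p h).trans (h2 u v).symm⟩, h2⟩
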